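/- arXiv:2509.10091 — 4 statements merged into one kernel-verified Lean document; each statement's English description precedes it below -/
import Mathlib

section
/- Let α, β, ε be real numbers with 0 < α < 1, 0 < β < 1, 0 < ε < 1 and ε < α + β < 2 − ε, and set ϑ̃ = (α+β+ε)π/(2(α+β)) and ζ = max{ (β/(α+β))·(α+β+ε)π/2 , (α+β+ε)π/2 }. Then for every nonzero complex number z with |arg z| < ϑ̃ (principal argument), one has z^α + 1 ≠ 0 and the complex number m(z) = z^{α+β}/(z^α + 1) (principal complex powers) satisfies m(z) ≠ 0 and |arg m(z)| < ζ. -/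
/-!
Write `θ = arg z`, `u = z ^ α` and `γ = α + β`. Since `|α θ| < π`, `arg u = α θ`, so `u ≠ -1`,
and adding `1` pulls `u` towards the positive real axis: `φ = arg (u + 1)` lies between `0` and
`α θ`. Hence `γ θ - φ` lies between `β θ` and `γ θ`, so `|γ θ - φ| ≤ γ |θ| < (γ + ε) π / 2 < π`;
in particular `γ θ - φ` is the principal argument of `z ^ γ / (u + 1)`. The second entry of the
maximum thus already bounds this argument.
-/

open Complex Real

/-- Adding `1` to a point of the closed upper half plane does not increase its argument: with
`φ = arg (u + 1)` and `ψ = arg u`, one has `‖u + 1‖ sin (φ - ψ) = - sin ψ ≤ 0`. -/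
lemma arg_add_one_le {u : ℂ} (hu : 0 ≤ u.arg) : 0 ≤ (u + 1).arg ∧ (u + 1).arg ≤ u.arg := by
  have him : 0 ≤ u.im := Complex.arg_nonneg_iff.1 hu
  have h0 : 0 ≤ (u + 1).arg := Complex.arg_nonneg_iff.2 (by simpa using him)
  refine ⟨h0, ?_⟩
  by_contra! hlt
  have hw : u + 1 ≠ 0 := by
    intro h
    rw [h, Complex.arg_zero] at hlt
    linarith
  have hu0 : 0 < u.arg ∨ u.arg = 0 := hu.lt_or_eq.imp id Eq.symm
  rcases hu0 with hpos | hzero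
  · have hs : 0 < Real.sin ((u + 1).arg - u.arg) :=
      Real.sin_pos_of_pos_of_lt_pi (by linarith) (by linarith [Complex.arg_le_pi (u + 1)])
    have hsu : 0 ≤ Real.sin u.arg :=
      Real.sin_nonneg_of_nonneg_of_le_pi hu (Complex.arg_le_pi u)
    have e1 := Complex.norm_mul_sin_arg (u + 1)
    have e2 := Complex.norm_mul_cos_arg (u + 1)
    have e3 := Complex.norm_mul_sin_arg u
    have e4 := Complex.norm_mul_cos_arg u
    simp only [Complex.add_re, Complex.add_im, Complex.one_re, Complex.one_im, add_zero] at e1 e2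
    have key : ‖u + 1‖ * Real.sin ((u + 1).arg - u.arg) = - Real.sin u.arg := by
      rw [Real.sin_sub]
      linear_combination Real.cos u.arg * e1 - Real.sin u.arg * e2
        - Real.cos u.arg * e3 + Real.sin u.arg * e4
    have := mul_pos (norm_pos_iff.2 hw) hs
    linarith
  · obtain ⟨hre, him0⟩ := Complex.arg_eq_zero_iff.1 hzero
    have : (u + 1).arg = 0 :=
      Complex.arg_eq_zero_iff.2 ⟨by simp; linarith, by simpa using him0⟩
    linarith

/-- The reflection of `arg_add_one_le` in the real axis. -/
lemma le_arg_add_one {u : ℂ} (hu : u.arg ≤ 0) : u.arg ≤ (u + 1).arg ∧ (u + 1).arg ≤ 0 := by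
  have hpi := Real.pi_pos
  have hc : (starRingEnd ℂ u).arg = -u.arg := by
    rw [Complex.arg_conj, if_neg (by linarith)]
  obtain ⟨h1, h2⟩ := arg_add_one_le (u := starRingEnd ℂ u) (by linarith)
  have hcc : starRingEnd ℂ u + 1 = starRingEnd ℂ (u + 1) := by simp
  rw [hcc, Complex.arg_conj] at h1 h2
  split_ifs at h1 h2 with h
  · -- here `arg u ≤ -π`, impossible for a principal argument
    linarith [Complex.neg_pi_lt_arg u]
  · constructor <;> linarith

/-- Lemma 2(a) of the paper: for `z` in the sector `Σ_ϑ̃`, the symbol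
`m(z) = z^(α+β)/(z^α+1)` is well defined, nonzero, and lies in the sector `Σ_ζ`. -/
theorem stmt_0 (α β ε : ℝ) (hα0 : 0 < α) (hα1 : α < 1) (hβ0 : 0 < β) (hβ1 : β < 1)
    (hε0 : 0 < ε) (hε1 : ε < 1) (hlow : ε < α + β) (hhigh : α + β < 2 - ε) :
    ∀ z : ℂ, z ≠ 0 →
      |Complex.arg z| < (α + β + ε) * Real.pi / (2 * (α + β)) →
      z ^ (α : ℂ) + 1 ≠ 0 ∧
      z ^ ((α + β : ℝ) : ℂ) / (z ^ (α : ℂ) + 1) ≠ 0 ∧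
      |Complex.arg (z ^ ((α + β : ℝ) : ℂ) / (z ^ (α : ℂ) + 1))| <
        max ((β / (α + β)) * ((α + β + ε) * Real.pi / 2)) ((α + β + ε) * Real.pi / 2) := by
  intro z hz hθ
  have hpi := Real.pi_pos
  have hγθ : (α + β) * |z.arg| < (α + β + ε) * Real.pi / 2 := by
    rw [lt_div_iff₀ (by linarith)] at hθ
    linarith
  have hζ : (α + β + ε) * Real.pi / 2 < Real.pi := by nlinarith
  have hαθ : |α * z.arg| < Real.pi := by
    rw [abs_mul, abs_of_pos hα0]
    nlinarith [abs_nonneg z.arg]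
  have harg : (z ^ (α : ℂ)).arg = α * z.arg := by
    rw [← Complex.log_im, Complex.cpow_def_of_ne_zero hz, Complex.log_exp]
    · simp [Complex.log_im, mul_comm]
    · simpa [Complex.log_im, mul_comm] using (abs_lt.1 hαθ).1
    · simpa [Complex.log_im, mul_comm] using (abs_lt.1 hαθ).2.le
  have hw : z ^ (α : ℂ) + 1 ≠ 0 := by
    intro h
    rw [eq_neg_of_add_eq_zero_left h, Complex.arg_neg_one] at harg
    linarith [(abs_lt.1 hαθ).2]
  have hzγ : z ^ ((α + β : ℝ) : ℂ) ≠ 0 := by simp [Complex.cpow_eq_zero_iff, hz]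
  refine ⟨hw, div_ne_zero hzγ hw, lt_of_lt_of_le ?_ (le_max_right _ _)⟩
  set w := z ^ (α : ℂ) + 1 with hwdef
  have hbound : |(α + β) * z.arg - w.arg| ≤ (α + β) * |z.arg| := by
    rcases le_total 0 z.arg with h | h
    · have hβ := mul_nonneg hβ0.le h
      obtain ⟨h1, h2⟩ := arg_add_one_le (u := z ^ (α : ℂ)) (by rw [harg]; positivity)
      rw [harg] at h2
      rw [abs_of_nonneg h, abs_le]
      constructor <;> nlinarith
    · have hβ := mul_nonpos_of_nonneg_of_nonpos hβ0.le h
      have hα := mul_nonpos_of_nonneg_of_nonpos hα0.le h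
      obtain ⟨h1, h2⟩ := le_arg_add_one (u := z ^ (α : ℂ)) (by rw [harg]; exact hα)
      rw [harg] at h1
      rw [abs_of_nonpos h, abs_le]
      constructor <;> nlinarith
  have hlt := hbound.trans_lt hγθ
  have him : (Complex.log z * ((α + β : ℝ) : ℂ) - Complex.log w).im
      = (α + β) * z.arg - w.arg := by
    rw [Complex.sub_im, Complex.im_mul_ofReal, Complex.log_im, Complex.log_im]
    ring
  have hm : (z ^ ((α + β : ℝ) : ℂ) / w).arg = (α + β) * z.arg - w.arg := by
    have hexp : z ^ ((α + β : ℝ) : ℂ) / w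
        = Complex.exp (Complex.log z * ((α + β : ℝ) : ℂ) - Complex.log w) := by
      rw [Complex.exp_sub, Complex.exp_log hw, Complex.cpow_def_of_ne_zero hz]
    rw [← Complex.log_im, hexp, Complex.log_exp, him]
    · rw [him]; linarith [(abs_lt.1 hlt).1]
    · rw [him]; linarith [(abs_lt.1 hlt).2]
  rwa [hm]
end

section
/- Define L(x) = 1 + |ln(1 − e^{−x})| for x > 0. Then for every γ > 0, the integral ∫₀^{+∞} e^{−γ·cosh x} dx converges and satisfies ∫₀^{+∞} e^{−γ·cosh x} dx ≤ L(γ). -/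
/-!
Let `G x = log (1 - exp (-γ cosh x)) - exp (-2x)`. Since `1 - exp (-γ cosh x) ≤ γ cosh x`, the
derivative of the logarithmic term is at least `exp (-γ cosh x) * tanh x`, and
`1 - tanh x ≤ 2 exp (-2x)`; hence `exp (-γ cosh x) ≤ G' x` for `x ≥ 0`
(`exp_neg_mul_cosh_le`). As `G` tends to `0` at infinity, the integral of `G'` over `(0, ∞)` is
`-G 0 = 1 - log (1 - exp (-γ))`, which gives both the integrability and the bound.
-/

open Real MeasureTheory

lemma one_sub_exp_neg_mul_cosh_pos {γ : ℝ} (hγ : 0 < γ) (x : ℝ) :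
    0 < 1 - Real.exp (-γ * Real.cosh x) := by
  have h : -γ * Real.cosh x < 0 := by nlinarith [mul_pos hγ (Real.cosh_pos x)]
  linarith [Real.exp_lt_one_iff.2 h]

lemma one_sub_tanh_le (x : ℝ) :
    1 - Real.sinh x / Real.cosh x ≤ 2 * Real.exp (-2 * x) := by
  have hc := Real.cosh_pos x
  have h1 : 1 - Real.sinh x / Real.cosh x = Real.exp (-x) / Real.cosh x := by
    rw [← Real.cosh_sub_sinh]
    field_simp
  rw [h1, div_le_iff₀ hc, Real.cosh_eq]
  have h2 : Real.exp (-2 * x) = Real.exp (-x) * Real.exp (-x) := by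
    rw [← Real.exp_add]; ring_nf
  have h3 : Real.exp (-x) * Real.exp x = 1 := by
    rw [← Real.exp_add]; simp
  have h4 : 0 < Real.exp (-x) := Real.exp_pos _
  rw [h2]
  have h5 : 2 * (Real.exp (-x) * Real.exp (-x)) * ((Real.exp x + Real.exp (-x)) / 2)
      = Real.exp (-x) * (Real.exp (-x) * Real.exp x) + Real.exp (-x) ^ 3 := by ring
  rw [h5, h3]
  nlinarith [pow_pos h4 3]

/-- The integrand is dominated by the derivative of
`log (1 - exp (-γ cosh x)) - exp (-2x)`. -/
lemma exp_neg_mul_cosh_le {γ : ℝ} (hγ : 0 < γ) {x : ℝ} (hx : 0 ≤ x) :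
    Real.exp (-γ * Real.cosh x) ≤
      γ * Real.sinh x * Real.exp (-γ * Real.cosh x) / (1 - Real.exp (-γ * Real.cosh x))
        + 2 * Real.exp (-2 * x) := by
  have hc := Real.cosh_pos x
  have hs : 0 ≤ Real.sinh x := Real.sinh_nonneg_iff.2 hx
  have hD := one_sub_exp_neg_mul_cosh_pos hγ x
  have hT := one_sub_tanh_le x
  have hB := Real.add_one_le_exp (-γ * Real.cosh x)
  have hE := Real.exp_pos (-γ * Real.cosh x)
  set E := Real.exp (-γ * Real.cosh x)
  have h1 : Real.sinh x / Real.cosh x ≤ γ * Real.sinh x / (1 - E) := by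
    rw [div_le_div_iff₀ hc hD]
    nlinarith [mul_nonneg hs (by linarith : 0 ≤ γ * Real.cosh x - (1 - E))]
  have h2 : 0 ≤ 1 - Real.sinh x / Real.cosh x := by
    rw [sub_nonneg, div_le_one hc]
    exact (Real.sinh_lt_cosh x).le
  have h3 : γ * Real.sinh x * E / (1 - E) = E * (γ * Real.sinh x / (1 - E)) := by ring
  rw [h3]
  nlinarith [mul_le_mul_of_nonneg_left h1 hE.le, mul_nonneg hD.le h2]

lemma hasDerivAt_log_one_sub_exp {γ : ℝ} (hγ : 0 < γ) (x : ℝ) :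
    HasDerivAt (fun x => Real.log (1 - Real.exp (-γ * Real.cosh x)) - Real.exp (-2 * x))
      (γ * Real.sinh x * Real.exp (-γ * Real.cosh x) / (1 - Real.exp (-γ * Real.cosh x))
        + 2 * Real.exp (-2 * x)) x := by
  have h1 := ((((Real.hasDerivAt_cosh x).const_mul (-γ)).exp.const_sub 1).log
    (one_sub_exp_neg_mul_cosh_pos hγ x).ne').sub (((hasDerivAt_id x).const_mul (-2)).exp)
  refine h1.congr_deriv ?_
  simp only [id]
  ring

lemma tendsto_log_one_sub_exp {γ : ℝ} (hγ : 0 < γ) :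
    Filter.Tendsto
      (fun x => Real.log (1 - Real.exp (-γ * Real.cosh x)) - Real.exp (-2 * x))
      Filter.atTop (nhds 0) := by
  have hc : Filter.Tendsto Real.cosh Filter.atTop Filter.atTop := by
    refine Filter.tendsto_atTop_mono (fun x => ?_)
      (Real.tendsto_exp_atTop.atTop_div_const (two_pos : (0 : ℝ) < 2))
    rw [Real.cosh_eq]
    linarith [Real.exp_pos (-x)]
  have h1 : Filter.Tendsto (fun x => Real.exp (-γ * Real.cosh x)) Filter.atTop (nhds 0) :=
    Real.tendsto_exp_atBot.comp (hc.const_mul_atTop_of_neg (by linarith))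
  have h2 : Filter.Tendsto (fun x : ℝ => Real.exp (-2 * x)) Filter.atTop (nhds 0) :=
    Real.tendsto_exp_atBot.comp (Filter.tendsto_id.const_mul_atTop_of_neg (by norm_num))
  have h3 : Filter.Tendsto (fun x => 1 - Real.exp (-γ * Real.cosh x)) Filter.atTop (nhds 1) := by
    simpa using h1.const_sub 1
  simpa using (h3.log one_ne_zero).sub h2

/-- First part of Lemma 3 (López-Fernández–Palencia): with
`L(x) = 1 + |ln(1 − e^(−x))|`, one has `∫₀^∞ e^(−γ cosh x) dx ≤ L(γ)`. -/
theorem stmt_8 (γ : ℝ) (hγ : 0 < γ) :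
    MeasureTheory.IntegrableOn (fun x : ℝ => Real.exp (-γ * Real.cosh x)) (Set.Ioi 0) ∧
    ∫ x in Set.Ioi (0 : ℝ), Real.exp (-γ * Real.cosh x) ≤
      1 + |Real.log (1 - Real.exp (-γ))| := by
  have hle : ∀ x ∈ Set.Ioi (0 : ℝ), _ := fun x hx =>
    exp_neg_mul_cosh_le hγ (le_of_lt (Set.mem_Ioi.1 hx))
  have hnn := fun x hx => (Real.exp_pos _).le.trans (hle x hx)
  have hG := integrableOn_Ioi_deriv_of_nonneg'
    (fun x _ => hasDerivAt_log_one_sub_exp hγ x) hnn (tendsto_log_one_sub_exp hγ)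
  have hval := integral_Ioi_of_hasDerivAt_of_nonneg'
    (fun x _ => hasDerivAt_log_one_sub_exp hγ x) hnn (tendsto_log_one_sub_exp hγ)
  have hI : IntegrableOn (fun x : ℝ => Real.exp (-γ * Real.cosh x)) (Set.Ioi 0) := by
    refine Integrable.mono' hG (by fun_prop) ?_
    filter_upwards [ae_restrict_mem measurableSet_Ioi] with x hx
    rw [Real.norm_of_nonneg (Real.exp_pos _).le]
    exact hle x hx
  refine ⟨hI, (setIntegral_mono_on hI hG measurableSet_Ioi hle).trans ?_⟩
  rw [hval]
  have h0 := neg_le_abs (Real.log (1 - Real.exp (-γ)))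
  simp only [Real.cosh_zero, mul_one, mul_zero, Real.exp_zero]
  linarith
end

section
/- Define L(x) = 1 + |ln(1 − e^{−x})| for x > 0. Then for every γ > 0 and every l > 0, ∫_{l}^{+∞} e^{−γ·cosh x} dx ≤ (1 + L(γ))·e^{−γ·cosh l}. -/
open Real MeasureTheory

/-!
Put `c = |ln(1 - e^{-γ})|` and `b = l + (c + 1)`. Since `e^{-c} = 1 - e^{-γ} ≤ γ`, one has
`γ sinh b ≥ γ sinh (c + 1) ≥ γ e^c ≥ 1`. On `(l, b]` the integrand is at most `e^{-γ cosh l}`,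
which contributes at most `(c + 1) e^{-γ cosh l}`. Beyond `b`, convexity gives
`cosh x ≥ cosh b + (x - b) sinh b`, so the integrand is at most `e^{-γ cosh l} e^{-(x - b)}`,
which contributes at most `e^{-γ cosh l}`.
-/

/-- The graph of `cosh` lies above its tangent line at `b ≥ 0`, to the right of `b`. -/
lemma cosh_tangent_le {b s : ℝ} (hb : 0 ≤ b) (hs : 0 ≤ s) :
    cosh b + s * sinh b ≤ cosh (b + s) := by
  rw [cosh_add]
  have h1 : cosh b * 1 ≤ cosh b * cosh s :=
    mul_le_mul_of_nonneg_left (one_le_cosh s) (cosh_pos b).le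
  have h2 : sinh b * s ≤ sinh b * sinh s :=
    mul_le_mul_of_nonneg_left (self_le_sinh_iff.2 hs) (sinh_nonneg_iff.2 hb)
  linarith

lemma exp_le_sinh_add_one {c : ℝ} (hc : 0 ≤ c) : exp c ≤ sinh (c + 1) := by
  rw [sinh_add, ← sinh_add_cosh]
  have h1 : sinh c * 1 ≤ sinh c * cosh 1 :=
    mul_le_mul_of_nonneg_left (one_le_cosh 1) (sinh_nonneg_iff.2 hc)
  have h2 : cosh c * 1 ≤ cosh c * sinh 1 :=
    mul_le_mul_of_nonneg_left (self_le_sinh_iff.2 zero_le_one) (cosh_pos c).le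
  linarith

lemma one_le_mul_exp_abs_log {γ : ℝ} (hγ : 0 < γ) :
    1 ≤ γ * exp |log (1 - exp (-γ))| := by
  have h0 : 0 < 1 - exp (-γ) := by
    have : exp (-γ) < 1 := by simpa using hγ
    linarith
  have h1 : 1 - exp (-γ) ≤ γ := by linarith [add_one_le_exp (-γ)]
  have h2 : log (1 - exp (-γ)) ≤ 0 := log_nonpos h0.le (by linarith [exp_pos (-γ)])
  rw [abs_of_nonpos h2, exp_neg, exp_log h0, ← div_eq_mul_inv, le_div_iff₀ h0]
  linarith

/-- Second part of Lemma 3 (López-Fernández–Palencia): with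
`L(x) = 1 + |ln(1 − e^(−x))|`, one has
`∫_l^∞ e^(−γ cosh x) dx ≤ (1 + L(γ)) e^(−γ cosh l)`. -/
theorem stmt_9 (γ l : ℝ) (hγ : 0 < γ) (hl : 0 < l) :
    MeasureTheory.IntegrableOn (fun x : ℝ => Real.exp (-γ * Real.cosh x)) (Set.Ioi l) ∧
    ∫ x in Set.Ioi l, Real.exp (-γ * Real.cosh x) ≤
      (1 + (1 + |Real.log (1 - Real.exp (-γ))|)) * Real.exp (-γ * Real.cosh l) := by
  have hkey := one_le_mul_exp_abs_log hγ
  set c := |log (1 - exp (-γ))| with hc_def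
  have hc : 0 ≤ c := abs_nonneg _
  obtain ⟨b, hb⟩ : ∃ b, b = l + (c + 1) := ⟨_, rfl⟩
  have hlb : l ≤ b := by linarith
  set f : ℝ → ℝ := fun x => exp (-γ * cosh x) with hf
  have hcont : Continuous f := by fun_prop
  have hslope : 1 ≤ γ * sinh b := by
    have h1 : sinh (c + 1) ≤ sinh b := sinh_le_sinh.2 (by linarith)
    have h2 := mul_le_mul_of_nonneg_left ((exp_le_sinh_add_one hc).trans h1) hγ.le
    linarith
  have hmono : ∀ x, l ≤ x → f x ≤ f l := by
    intro x hx
    have h1 : cosh l ≤ cosh x := by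
      rw [cosh_le_cosh, abs_of_pos hl, abs_of_pos (hl.trans_le hx)]
      exact hx
    refine exp_le_exp.2 ?_
    linarith [mul_le_mul_of_nonneg_left h1 hγ.le]
  have htail : ∀ x ∈ Set.Ioi b, f x ≤ f l * exp b * exp (-x) := by
    intro x hx
    have hx' : 0 ≤ x - b := sub_nonneg.2 (le_of_lt hx)
    have h1 := cosh_tangent_le (b := b) (by linarith) hx'
    rw [add_sub_cancel] at h1
    have h2 := mul_le_mul_of_nonneg_left h1 hγ.le
    have h3 := mul_le_mul_of_nonneg_left hslope hx'
    calc f x ≤ f b * exp (b - x) := by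
          rw [hf, ← exp_add]
          refine exp_le_exp.2 ?_
          linarith
      _ ≤ f l * exp (b - x) := mul_le_mul_of_nonneg_right (hmono b hlb) (exp_pos _).le
      _ = f l * exp b * exp (-x) := by rw [sub_eq_add_neg, exp_add, mul_assoc]
  have hg : IntegrableOn (fun x => f l * exp b * exp (-x)) (Set.Ioi b) :=
    (integrableOn_exp_neg_Ioi b).const_mul _
  have hI2 : IntegrableOn f (Set.Ioi b) := by
    refine Integrable.mono' hg hcont.aestronglyMeasurable ?_
    refine (ae_restrict_iff' measurableSet_Ioi).2 (Filter.Eventually.of_forall fun x hx => ?_)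
    rw [norm_of_nonneg (exp_pos _).le]
    exact htail x hx
  have hI1 : IntegrableOn f (Set.Ioc l b) := hcont.integrableOn_Ioc
  have hunion : Set.Ioc l b ∪ Set.Ioi b = Set.Ioi l := Set.Ioc_union_Ioi_eq_Ioi hlb
  refine ⟨hunion ▸ hI1.union hI2, ?_⟩
  have h1 : ∫ x in Set.Ioc l b, f x ≤ (c + 1) * f l := by
    calc ∫ x in Set.Ioc l b, f x ≤ ∫ _ in Set.Ioc l b, f l :=
          setIntegral_mono_on hI1 (by simp) measurableSet_Ioc
            fun x hx => hmono x hx.1.le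
      _ = (c + 1) * f l := by
          rw [setIntegral_const, smul_eq_mul, volume_real_Ioc_of_le hlb, hb]
          ring
  have h2 : ∫ x in Set.Ioi b, f x ≤ f l := by
    calc ∫ x in Set.Ioi b, f x ≤ ∫ x in Set.Ioi b, f l * exp b * exp (-x) :=
          setIntegral_mono_on hI2 hg measurableSet_Ioi htail
      _ = f l := by
          rw [integral_const_mul, integral_exp_neg_Ioi, mul_assoc, ← exp_add, add_neg_cancel,
            exp_zero, mul_one]
  rw [← hunion, setIntegral_union (Set.Ioc_disjoint_Ioi le_rfl) measurableSet_Ioi hI1 hI2]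
  change _ ≤ (1 + (1 + c)) * f l
  linarith
end

section
/- Define L(x) = 1 + |ln(1 − e^{−x})| for x > 0. Let γ > 0, τ > 0, and let N ≥ 1 be a natural number. Then the series Σ_{k=N}^{∞} e^{−γ·cosh((k + 1/2)τ)} converges and τ·Σ_{k=N}^{∞} e^{−γ·cosh((k + 1/2)τ)} ≤ (1 + L(γ))·e^{−γ·cosh((N − 1/2)τ)}. -/
open Real

/-!
The tail of the midpoint sum is compared with the integral of the antitone function
`x ↦ exp (-γ cosh x)` over `[l, ∞)`, where `l = (N - 1/2) τ`. Put `c = |log (1 - exp (-γ))|`.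
On `[l, l + (1 + c)]` the integrand is at most its value at `l`, which contributes a factor `1 + c`.
Since `1 - exp (-γ) ≤ γ`, we have `γ * exp c ≥ 1`, hence `γ * sinh x ≥ 1` beyond `l + (1 + c)`;
there the integrand is dominated by `γ sinh x * exp (-γ cosh x)`, the derivative of
`-exp (-γ cosh x)`, which contributes at most one more copy of `exp (-γ cosh l)`.
-/

/-- The point `1 + |log (1 - exp (-γ))|` lies far enough out for `γ * sinh` to exceed `1`. -/
lemma one_le_mul_sinh (γ : ℝ) (hγ : 0 < γ) :
    1 ≤ γ * sinh (1 + |log (1 - exp (-γ))|) := by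
  set c := |log (1 - exp (-γ))| with hc
  have hc0 : 0 ≤ c := abs_nonneg _
  have hpos : 0 < 1 - exp (-γ) := by
    have : exp (-γ) < 1 := by rw [exp_lt_one_iff]; linarith
    linarith
  have hle : 1 - exp (-γ) ≤ γ := by
    have := add_one_le_exp (-γ)
    linarith
  have hexp : 1 ≤ (1 - exp (-γ)) * exp c := by
    have h1 : exp (-log (1 - exp (-γ))) ≤ exp c := exp_le_exp.2 (neg_le_abs _)
    rw [exp_neg, exp_log hpos] at h1
    calc (1 : ℝ) = (1 - exp (-γ)) * (1 - exp (-γ))⁻¹ := (mul_inv_cancel₀ hpos.ne').symm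
      _ ≤ _ := by gcongr
  have hsinh : exp c ≤ sinh (1 + c) := by
    rw [sinh_add, ← cosh_add_sinh c]
    have h1 : 1 ≤ sinh 1 := self_le_sinh_iff.2 zero_le_one
    have h2 : 1 ≤ cosh 1 := one_le_cosh 1
    have h3 : 0 < cosh c := cosh_pos c
    have h4 : 0 ≤ sinh c := sinh_nonneg_iff.2 hc0
    nlinarith
  calc 1 ≤ (1 - exp (-γ)) * exp c := hexp
    _ ≤ γ * sinh (1 + c) := by gcongr

lemma exp_neg_mul_cosh_anti {γ x y : ℝ} (hγ : 0 < γ) (hx : 0 ≤ x) (hxy : x ≤ y) :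
    exp (-γ * cosh y) ≤ exp (-γ * cosh x) := by
  have : cosh x ≤ cosh y := by
    rw [cosh_le_cosh, abs_of_nonneg hx, abs_of_nonneg (hx.trans hxy)]
    exact hxy
  apply exp_le_exp.2
  nlinarith

lemma intervalIntegrable_exp_neg_mul_cosh (γ a b : ℝ) :
    IntervalIntegrable (fun x => exp (-γ * cosh x)) MeasureTheory.volume a b :=
  Continuous.intervalIntegrable (by fun_prop) _ _

lemma integral_le_length_mul {γ l b : ℝ} (hγ : 0 < γ) (hl : 0 ≤ l) (hb : l ≤ b) :
    ∫ x in l..b, exp (-γ * cosh x) ≤ (b - l) * exp (-γ * cosh l) := by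
  calc ∫ x in l..b, exp (-γ * cosh x) ≤ ∫ _ in l..b, exp (-γ * cosh l) :=
        intervalIntegral.integral_mono_on hb (intervalIntegrable_exp_neg_mul_cosh _ _ _)
          (by simp) fun x hx => exp_neg_mul_cosh_anti hγ hl hx.1
    _ = _ := by simp

/-- Once `γ * sinh a ≥ 1`, the integrand is dominated on `[a, b]` by the derivative of
`-exp (-γ cosh x)`. -/
lemma integral_le_of_one_le_mul_sinh {γ a b : ℝ} (hγ : 0 < γ) (ha : 1 ≤ γ * sinh a)
    (hab : a ≤ b) :
    ∫ x in a..b, exp (-γ * cosh x) ≤ exp (-γ * cosh a) := by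
  have hcont : Continuous fun x => γ * sinh x * exp (-γ * cosh x) := by fun_prop
  have hint := hcont.intervalIntegrable (μ := MeasureTheory.volume) a b
  have hFTC : ∫ x in a..b, γ * sinh x * exp (-γ * cosh x) =
      -exp (-γ * cosh b) - -exp (-γ * cosh a) := by
    refine intervalIntegral.integral_eq_sub_of_hasDerivAt
      (f := fun x => -exp (-γ * cosh x)) (fun x _ => ?_) hint
    exact (((hasDerivAt_cosh x).const_mul (-γ)).exp).neg.congr_deriv (by ring)
  calc ∫ x in a..b, exp (-γ * cosh x) ≤ ∫ x in a..b, γ * sinh x * exp (-γ * cosh x) := by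
        refine intervalIntegral.integral_mono_on hab
          (intervalIntegrable_exp_neg_mul_cosh _ _ _) hint fun x hx => ?_
        have h1 : sinh a ≤ sinh x := sinh_le_sinh.2 hx.1
        have h2 : 1 ≤ γ * sinh x := ha.trans (by gcongr)
        exact le_mul_of_one_le_left (exp_pos _).le h2
    _ ≤ _ := by
        rw [hFTC]
        linarith [exp_pos (-γ * cosh b)]

lemma integral_exp_neg_mul_cosh_le {γ l b : ℝ} (hγ : 0 < γ) (hl : 0 ≤ l) (hb : l ≤ b) :
    ∫ x in l..b, exp (-γ * cosh x) ≤
      (1 + (1 + |log (1 - exp (-γ))|)) * exp (-γ * cosh l) := by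
  have hu := one_le_mul_sinh γ hγ
  set u := 1 + |log (1 - exp (-γ))| with hu_def
  have hu0 : 0 ≤ u := by positivity
  have hE := exp_pos (-γ * cosh l)
  rcases le_total b (l + u) with h | h
  · refine (integral_le_length_mul hγ hl hb).trans ?_
    gcongr
    linarith
  · rw [← intervalIntegral.integral_add_adjacent_intervals
      (intervalIntegrable_exp_neg_mul_cosh γ l (l + u))
      (intervalIntegrable_exp_neg_mul_cosh γ (l + u) b)]
    have h1 := integral_le_length_mul hγ hl (le_add_of_nonneg_right hu0 : l ≤ l + u)
    have hs : 1 ≤ γ * sinh (l + u) := by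
      refine hu.trans ?_
      have : sinh u ≤ sinh (l + u) := sinh_le_sinh.2 (by linarith)
      gcongr
    have h2 := integral_le_of_one_le_mul_sinh hγ hs h
    have h3 := exp_neg_mul_cosh_anti hγ hl (le_add_of_nonneg_right hu0 : l ≤ l + u)
    rw [add_sub_cancel_left] at h1
    linarith

lemma mul_sum_range_le {γ τ l : ℝ} (hγ : 0 < γ) (hτ : 0 < τ) (hl : 0 ≤ l) (n : ℕ) :
    τ * ∑ k ∈ Finset.range n, exp (-γ * cosh (l + (k + 1) * τ)) ≤
      ∫ x in l..(l + n * τ), exp (-γ * cosh x) := by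
  induction n with
  | zero => simp
  | succ n ih =>
    have hn : 0 ≤ l + n * τ := by positivity
    have hstep : l + n * τ ≤ l + (n + 1) * τ := by nlinarith
    rw [Finset.sum_range_succ, mul_add, Nat.cast_succ,
      ← intervalIntegral.integral_add_adjacent_intervals
        (intervalIntegrable_exp_neg_mul_cosh γ l (l + n * τ))
        (intervalIntegrable_exp_neg_mul_cosh γ (l + n * τ) (l + (n + 1) * τ))]
    refine add_le_add ih ?_
    calc τ * exp (-γ * cosh (l + (n + 1) * τ))
        = ∫ _ in (l + n * τ)..(l + (n + 1) * τ), exp (-γ * cosh (l + (n + 1) * τ)) := by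
          rw [intervalIntegral.integral_const, smul_eq_mul]
          ring
      _ ≤ _ := intervalIntegral.integral_mono_on hstep (by simp)
          (intervalIntegrable_exp_neg_mul_cosh _ _ _)
          fun x hx => exp_neg_mul_cosh_anti hγ (hn.trans hx.1) hx.2

/-- Truncation-error bound from the proof of Theorem 2: the tail of the
midpoint-rule series satisfies
`τ Σ_{k=N}^∞ e^(−γ cosh((k+1/2)τ)) ≤ (1 + L(γ)) e^(−γ cosh((N−1/2)τ))`. -/
theorem stmt_10 (γ τ : ℝ) (N : ℕ) (hγ : 0 < γ) (hτ : 0 < τ) (hN : 1 ≤ N) :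
    Summable (fun k : ℕ => Real.exp (-γ * Real.cosh ((((N + k : ℕ) : ℝ) + 1 / 2) * τ))) ∧
    τ * ∑' k : ℕ, Real.exp (-γ * Real.cosh ((((N + k : ℕ) : ℝ) + 1 / 2) * τ)) ≤
      (1 + (1 + |Real.log (1 - Real.exp (-γ))|)) *
        Real.exp (-γ * Real.cosh (((N : ℝ) - 1 / 2) * τ)) := by
  have hl : 0 ≤ ((N : ℝ) - 1 / 2) * τ := by
    have : (1 : ℝ) ≤ N := by exact_mod_cast hN
    exact mul_nonneg (by linarith) hτ.le
  have hnode : ∀ k : ℕ, (((N + k : ℕ) : ℝ) + 1 / 2) * τ =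
      ((N : ℝ) - 1 / 2) * τ + (k + 1) * τ := fun k => by
    push_cast
    ring
  simp only [hnode]
  set l := ((N : ℝ) - 1 / 2) * τ
  have hpartial : ∀ n : ℕ, ∑ k ∈ Finset.range n, exp (-γ * cosh (l + (k + 1) * τ)) ≤
      (1 + (1 + |log (1 - exp (-γ))|)) * exp (-γ * cosh l) / τ := fun n => by
    rw [le_div_iff₀' hτ]
    exact (mul_sum_range_le hγ hτ hl n).trans
      (integral_exp_neg_mul_cosh_le hγ hl (le_add_of_nonneg_right (by positivity)))
  refine ⟨summable_of_sum_range_le (fun _ => (exp_pos _).le) hpartial, ?_⟩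
  rw [← le_div_iff₀' hτ]
  exact Real.tsum_le_of_sum_range_le (fun _ => (exp_pos _).le) hpartial
end
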